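/- In the abstract framework, for every y > 0 the family {V⁻(h) : h ∈ 𝒟(y)} of negative parts of the conjugate function evaluated at dual elements is uniformly integrable with respect to μ, where V⁻ := max(−V, 0). -/

import Mathlib

open MeasureTheory Filter Topology

variable {Ω : Type}

/-- The abstract primal domain `𝒞(x)`: nonnegative measurable `g` such that
`∫ (g − f) h dμ ≤ x` for all `h ∈ 𝒟` (expressed, for nonnegative quantities,
as `∫ g h dμ ≤ x + ∫ f h dμ` using lower integrals). -/
def memC [MeasurableSpace Ω] (μ : Measure Ω) (D : Set (Ω → ℝ)) (f : Ω → ℝ)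
    (x : ℝ) (g : Ω → ℝ) : Prop :=
  Measurable g ∧ (∀ᵐ ω ∂μ, 0 ≤ g ω) ∧
    ∀ h ∈ D, (∫⁻ ω, ENNReal.ofReal (g ω * h ω) ∂μ) ≤
      ENNReal.ofReal x + ∫⁻ ω, ENNReal.ofReal (f ω * h ω) ∂μ

/-- The abstract dual domain `𝒟(y) = y 𝒟`. -/
def memD (D : Set (Ω → ℝ)) (y : ℝ) (h : Ω → ℝ) : Prop :=
  ∃ h₀ ∈ D, h = fun ω => y * h₀ ω

/-- The convex conjugate `V(y) = sup_{x>0} (U(x) − x y)`. -/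
noncomputable def Vconj (U : ℝ → ℝ) (y : ℝ) : ℝ :=
  sSup {z | ∃ x : ℝ, 0 < x ∧ z = U x - x * y}

/-- The primal value function `u(x) = sup_{g ∈ 𝒞(x)} ∫ U(g) dμ`. -/
noncomputable def uval [MeasurableSpace Ω] (μ : Measure Ω) (D : Set (Ω → ℝ))
    (f : Ω → ℝ) (U : ℝ → ℝ) (x : ℝ) : ℝ :=
  sSup {z | ∃ g, memC μ D f x g ∧ z = ∫ ω, U (g ω) ∂μ}

/-- The dual value function `v(y) = inf_{h ∈ 𝒟(y)} ∫ (V(h) + f h) dμ`. -/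
noncomputable def vval [MeasurableSpace Ω] (μ : Measure Ω) (D : Set (Ω → ℝ))
    (f : Ω → ℝ) (U : ℝ → ℝ) (y : ℝ) : ℝ :=
  sInf {z | ∃ h, memD D y h ∧ z = ∫ ω, (Vconj U (h ω) + f ω * h ω) ∂μ}

open scoped ENNReal

/-!
For fixed `x > 0` the Fenchel inequality `V(y) ≥ U(x) - x y` gives `V⁻(y) ≤ U⁻(x) + x y⁺`. Since `x`
may be taken arbitrarily small, `V⁻` grows sublinearly. A function of sublinear growth maps an
`L¹`-bounded family to a uniformly integrable one: where `f ≤ c + g` and `2 c < f`, the constant is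
absorbed and `f ≤ 2 g`.
-/

section SublinearGrowth

variable {α : Type*} [MeasurableSpace α] {μ : Measure α}

theorem setLIntegral_ofReal_le_two_mul_of_le_const_add {f g : α → ℝ} {c : ℝ}
    (hg : AEMeasurable g μ) (hfg : ∀ᵐ a ∂μ, f a ≤ c + g a) :
    ∫⁻ a in {a | 2 * c < f a}, ENNReal.ofReal (f a) ∂μ ≤ 2 * ∫⁻ a, ENNReal.ofReal (g a) ∂μ := by
  have f_le_two_mul_g : ∀ᵐ a ∂μ, a ∈ {a | 2 * c < f a} →
      ENNReal.ofReal (f a) ≤ 2 * ENNReal.ofReal (g a) := by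
    filter_upwards [hfg] with a hle (hlt : 2 * c < f a)
    calc ENNReal.ofReal (f a) ≤ ENNReal.ofReal (2 * g a) :=
          ENNReal.ofReal_le_ofReal (by linarith)
      _ = 2 * ENNReal.ofReal (g a) := by rw [ENNReal.ofReal_mul zero_le_two, ENNReal.ofReal_ofNat]
  calc ∫⁻ a in {a | 2 * c < f a}, ENNReal.ofReal (f a) ∂μ
      ≤ ∫⁻ a in {a | 2 * c < f a}, 2 * ENNReal.ofReal (g a) ∂μ :=
        setLIntegral_mono_ae (hg.ennreal_ofReal.const_mul 2).restrict f_le_two_mul_g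
    _ ≤ ∫⁻ a, 2 * ENNReal.ofReal (g a) ∂μ := setLIntegral_le_lintegral _ _
    _ = 2 * ∫⁻ a, ENNReal.ofReal (g a) ∂μ := lintegral_const_mul' _ _ ENNReal.ofNat_ne_top

theorem exists_forall_setLIntegral_comp_le_of_sublinear_growth {φ : ℝ → ℝ}
    (hφ : ∀ δ : ℝ, 0 < δ → ∃ c, ∀ t, φ t ≤ c + δ * t⁺) {H : Set (α → ℝ)} {C : ℝ≥0∞}
    (hC : C ≠ ∞) (hH_meas : ∀ h ∈ H, AEMeasurable h μ)
    (hH_bound : ∀ h ∈ H, ∫⁻ a, ENNReal.ofReal (h a) ∂μ ≤ C) {ε : ℝ≥0∞} (hε : ε ≠ 0) :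
    ∃ K : ℝ, ∀ h ∈ H, ∫⁻ a in {a | K < φ (h a)}, ENNReal.ofReal (φ (h a)) ∂μ ≤ ε := by
  obtain ⟨δ, hδ, hδε⟩ :=
    ENNReal.exists_nnreal_pos_mul_lt (ENNReal.mul_ne_top ENNReal.ofNat_ne_top hC : 2 * C ≠ ∞) hε
  obtain ⟨c, hc⟩ := hφ δ hδ
  refine ⟨2 * c, fun h hh => ?_⟩
  have ofReal_mul_posPart (t : ℝ) : ENNReal.ofReal (δ * t⁺) = δ * ENNReal.ofReal t := by
    simp only [ENNReal.ofReal_mul δ.coe_nonneg, ENNReal.ofReal_coe_nnreal, posPart_def,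
      ENNReal.ofReal_max, ENNReal.ofReal_zero, max_eq_left zero_le]
  calc ∫⁻ a in {a | 2 * c < φ (h a)}, ENNReal.ofReal (φ (h a)) ∂μ
      ≤ 2 * ∫⁻ a, ENNReal.ofReal (δ * (h a)⁺) ∂μ :=
        setLIntegral_ofReal_le_two_mul_of_le_const_add
          (((hH_meas h hh).sup_const 0).const_mul _) (.of_forall fun a => hc (h a))
    _ = 2 * (δ * ∫⁻ a, ENNReal.ofReal (h a) ∂μ) := by
        simp_rw [ofReal_mul_posPart, lintegral_const_mul' _ _ (ENNReal.coe_ne_top (r := δ))]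
    _ ≤ 2 * (δ * C) := by gcongr; exact hH_bound h hh
    _ = δ * (2 * C) := mul_left_comm _ _ _
    _ ≤ ε := hδε.le

end SublinearGrowth

theorem negPart_Vconj_le (U : ℝ → ℝ) {x : ℝ} (hx : 0 < x) (y : ℝ) :
    (Vconj U y)⁻ ≤ (U x)⁻ + x * y⁺ := by
  have rhs_nonneg : 0 ≤ (U x)⁻ + x * y⁺ := by positivity
  by_cases hbdd : BddAbove {z | ∃ x : ℝ, 0 < x ∧ z = U x - x * y}
  · have fenchel : U x - x * y ≤ Vconj U y := le_csSup hbdd ⟨x, hx, rfl⟩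
    have neg_Vconj_le : -Vconj U y ≤ (U x)⁻ + x * y⁺ := by
      calc -Vconj U y ≤ -U x + x * y := by linarith
        _ ≤ (U x)⁻ + x * y⁺ := by
          gcongr
          exacts [neg_le_negPart _, le_posPart _]
    exact max_le neg_Vconj_le rhs_nonneg
  · -- Here `V(y) = +∞`, so `V⁻(y) = 0`, which the junk value `sSup = 0` reproduces.
    have Vconj_eq_zero : Vconj U y = 0 := Real.sSup_of_not_bddAbove hbdd
    rwa [Vconj_eq_zero, negPart_zero]

theorem memD.lintegral_ofReal_le [MeasurableSpace Ω] {μ : Measure Ω} {D : Set (Ω → ℝ)}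
    {C : ℝ≥0∞} (hD_bound : ∀ h ∈ D, ∫⁻ ω, ENNReal.ofReal (h ω) ∂μ ≤ C) {y : ℝ} (hy : 0 ≤ y)
    {h : Ω → ℝ} (hh : memD D y h) :
    ∫⁻ ω, ENNReal.ofReal (h ω) ∂μ ≤ ENNReal.ofReal y * C := by
  obtain ⟨h₀, hh₀, rfl⟩ := hh
  simp_rw [ENNReal.ofReal_mul hy, lintegral_const_mul' _ _ ENNReal.ofReal_ne_top]
  gcongr
  exact hD_bound h₀ hh₀

theorem memD.measurable [MeasurableSpace Ω] {D : Set (Ω → ℝ)}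
    (hD_meas : ∀ h ∈ D, Measurable h) {y : ℝ} {h : Ω → ℝ} (hh : memD D y h) : Measurable h := by
  obtain ⟨h₀, hh₀, rfl⟩ := hh
  exact (hD_meas h₀ hh₀).const_mul y

theorem dual_uniform_integrability_general {α : Type*} [MeasurableSpace α] {μ : Measure α}
    {H : Set (α → ℝ)} {C : ℝ≥0∞} (hC : C ≠ ∞) (hH_meas : ∀ h ∈ H, AEMeasurable h μ)
    (hH_bound : ∀ h ∈ H, ∫⁻ a, ENNReal.ofReal (h a) ∂μ ≤ C) (U : ℝ → ℝ) {ε : ℝ≥0∞} (hε : ε ≠ 0) :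
    ∃ K : ℝ, ∀ h ∈ H,
      ∫⁻ a in {a | K < (Vconj U (h a))⁻}, ENNReal.ofReal (Vconj U (h a))⁻ ∂μ ≤ ε :=
  exists_forall_setLIntegral_comp_le_of_sublinear_growth (φ := fun t => (Vconj U t)⁻)
    (fun x hx => ⟨(U x)⁻, negPart_Vconj_le U hx⟩) hC hH_meas hH_bound hε

/-- **Uniform integrability of `V⁻(h)`, `h ∈ 𝒟(y)`** (Lemma `Vminush`). -/
theorem dual_uniform_integrability
    [MeasurableSpace Ω] (μ : Measure Ω) [IsFiniteMeasure μ]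
    (D : Set (Ω → ℝ)) (rlow : ℝ) (hrlow : 0 < rlow)
    (hD_meas : ∀ h ∈ D, Measurable h)
    (hD_nonneg : ∀ h ∈ D, ∀ᵐ ω ∂μ, 0 ≤ h ω)
    (hD_conv : ∀ h₁ ∈ D, ∀ h₂ ∈ D, ∀ a b : ℝ, 0 ≤ a → 0 ≤ b → a + b = 1 →
      (fun ω => a * h₁ ω + b * h₂ ω) ∈ D)
    (hD_closed : ∀ hs : ℕ → Ω → ℝ, (∀ n, hs n ∈ D) → ∀ h : Ω → ℝ, Measurable h →
      (∀ᵐ ω ∂μ, Tendsto (fun n => hs n ω) atTop (𝓝 (h ω))) → h ∈ D)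
    (hD_bound : ∀ h ∈ D, (∫⁻ ω, ENNReal.ofReal (h ω) ∂μ) ≤ ENNReal.ofReal (1 / rlow))
    (U : ℝ → ℝ)
    (hU_sc : StrictConcaveOn ℝ (Set.Ioi 0) U)
    (hU_mono : StrictMonoOn U (Set.Ioi 0))
    (hU_diff : ∀ x : ℝ, 0 < x → HasDerivAt U (deriv U x) x)
    (hU_contDeriv : ContinuousOn (deriv U) (Set.Ioi 0))
    (hU_inada0 : Tendsto (deriv U) (𝓝[>] (0:ℝ)) atTop)
    (hU_inadaInf : Tendsto (deriv U) atTop (𝓝 (0:ℝ)))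
 :
    ∀ y : ℝ, 0 < y → ∀ ε : ℝ, 0 < ε → ∃ K : ℝ, ∀ h, memD D y h →
      (∫⁻ ω in {ω | K < max (-(Vconj U (h ω))) 0},
          ENNReal.ofReal (max (-(Vconj U (h ω))) 0) ∂μ)
        ≤ ENNReal.ofReal ε := by
  intro y hy ε hε
  exact dual_uniform_integrability_general (H := {h | memD D y h})
    (ENNReal.mul_ne_top ENNReal.ofReal_ne_top ENNReal.ofReal_ne_top)
    (fun _ hh => (memD.measurable hD_meas hh).aemeasurable)
    (fun _ hh => memD.lintegral_ofReal_le hD_bound hy.le hh) U (ENNReal.ofReal_pos.2 hε).ne'
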